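/- arXiv:math-ph/0310064 — 2 statements merged into one kernel-verified Lean document; each statement's English description precedes it below -/
import Mathlib

section
/- The function τ₁(c) = (3−c)/(4c·(log c)²) − 1/(2c(c−1)·log c) is concave on (0,1) and on (1,∞). -/
noncomputable def tau1 (c : ℝ) : ℝ :=
  (3 - c) / (4 * c * (Real.log c) ^ 2) - 1 / (2 * c * (c - 1) * Real.log c)

/-- A cubic-coefficient exponential polynomial with exponents from 0 to 4. -/
noncomputable def G (a0 a1 a2 a3 b0 b1 b2 b3 c0 c1 c2 c3 d0 d1 d2 d3 e0 e1 e2 e3 t : ℝ) : ℝ :=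
  (a0 + a1 * t + a2 * t ^ 2 + a3 * t ^ 3) * Real.exp t ^ 0 +
  (b0 + b1 * t + b2 * t ^ 2 + b3 * t ^ 3) * Real.exp t ^ 1 +
  (c0 + c1 * t + c2 * t ^ 2 + c3 * t ^ 3) * Real.exp t ^ 2 +
  (d0 + d1 * t + d2 * t ^ 2 + d3 * t ^ 3) * Real.exp t ^ 3 +
  (e0 + e1 * t + e2 * t ^ 2 + e3 * t ^ 3) * Real.exp t ^ 4

theorem nonneg_of_deriv_ge (f f' : ℝ → ℝ) (k : ℝ) (hf : ∀ t, HasDerivAt f (f' t) t)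
    (h0 : 0 ≤ f 0) (h : ∀ t, 0 ≤ t → 0 ≤ f' t - k * f t) : ∀ t, 0 ≤ t → 0 ≤ f t := by
  have hg : ∀ t, HasDerivAt (fun t => Real.exp (-k * t) * f t)
      (Real.exp (-k * t) * (f' t - k * f t)) t := by
    intro t
    have h1 : HasDerivAt (fun t : ℝ => -k * t) (-k) t := by
      simpa using (hasDerivAt_id t).const_mul (-k)
    refine (h1.exp.mul (hf t)).congr_deriv ?_
    ring
  have hm : MonotoneOn (fun t => Real.exp (-k * t) * f t) (Set.Ici 0) := by
    refine monotoneOn_of_deriv_nonneg (convex_Ici 0) ?_ ?_ ?_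
    · exact fun t _ => (hg t).continuousAt.continuousWithinAt
    · exact fun t _ => (hg t).differentiableAt.differentiableWithinAt
    · intro t ht
      rw [interior_Ici] at ht
      rw [(hg t).deriv]
      exact mul_nonneg (Real.exp_pos _).le (h t (le_of_lt ht))
  intro t ht
  have h2 := hm (Set.mem_Ici.2 le_rfl) (Set.mem_Ici.2 ht) ht
  simp only [mul_zero, Real.exp_zero, one_mul] at h2
  exact nonneg_of_mul_nonneg_right (h0.trans h2) (Real.exp_pos _)

theorem G_step (k a0 a1 a2 a3 b0 b1 b2 b3 c0 c1 c2 c3 d0 d1 d2 d3 e0 e1 e2 e3 : ℝ)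
    (h0 : 0 ≤ a0 + b0 + c0 + d0 + e0)
    (h : ∀ t, 0 ≤ t → 0 ≤ G (1 * a1 + (0 - k) * a0) (2 * a2 + (0 - k) * a1) (3 * a3 + (0 - k) * a2) ((0 - k) * a3) (1 * b1 + (1 - k) * b0) (2 * b2 + (1 - k) * b1) (3 * b3 + (1 - k) * b2) ((1 - k) * b3) (1 * c1 + (2 - k) * c0) (2 * c2 + (2 - k) * c1) (3 * c3 + (2 - k) * c2) ((2 - k) * c3) (1 * d1 + (3 - k) * d0) (2 * d2 + (3 - k) * d1) (3 * d3 + (3 - k) * d2) ((3 - k) * d3) (1 * e1 + (4 - k) * e0) (2 * e2 + (4 - k) * e1) (3 * e3 + (4 - k) * e2) ((4 - k) * e3) t) :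
    ∀ t, 0 ≤ t → 0 ≤ G a0 a1 a2 a3 b0 b1 b2 b3 c0 c1 c2 c3 d0 d1 d2 d3 e0 e1 e2 e3 t := by
  have hp : ∀ p0 p1 p2 p3 t : ℝ, HasDerivAt (fun t : ℝ => p0 + p1 * t + p2 * t ^ 2 + p3 * t ^ 3)
      (p1 + 2 * p2 * t + 3 * p3 * t ^ 2) t := by
    intro p0 p1 p2 p3 t
    have h1 := (((hasDerivAt_id t).const_mul p1).const_add p0).add
      (((hasDerivAt_id t).pow 2).const_mul p2)
    refine (h1.add (((hasDerivAt_id t).pow 3).const_mul p3)).congr_deriv ?_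
    simp
    ring
  have he : ∀ (n : ℕ) (t : ℝ), HasDerivAt (fun t : ℝ => Real.exp t ^ n) (n * Real.exp t ^ n) t := by
    intro n t
    refine ((Real.hasDerivAt_exp t).pow n).congr_deriv ?_
    rcases n with _ | n
    · simp
    · simp only [Nat.add_sub_cancel]
      ring
  have hd := fun t : ℝ => (((((hp a0 a1 a2 a3 t).mul (he 0 t)).add
    ((hp b0 b1 b2 b3 t).mul (he 1 t))).add ((hp c0 c1 c2 c3 t).mul (he 2 t))).add
    ((hp d0 d1 d2 d3 t).mul (he 3 t))).add ((hp e0 e1 e2 e3 t).mul (he 4 t))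
  refine nonneg_of_deriv_ge _ _ k hd ?_ ?_
  · simpa [G] using h0
  · intro t ht
    refine (h t ht).trans_eq ?_
    simp only [G]
    push_cast
    ring

theorem G_pos_side : ∀ t : ℝ, 0 ≤ t → 0 ≤ G (9) (11) (6) (2) (-30) (-32) (-17) (-6) (36) (32) (14) (6) (-18) (-12) (-3) (0) (3) (1) (0) (0) t := by
  refine G_step 0 _ _ _ _ _ _ _ _ _ _ _ _ _ _ _ _ _ _ _ _ (by norm_num) ?_
  norm_num
  refine G_step 0 _ _ _ _ _ _ _ _ _ _ _ _ _ _ _ _ _ _ _ _ (by norm_num) ?_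
  norm_num
  refine G_step 0 _ _ _ _ _ _ _ _ _ _ _ _ _ _ _ _ _ _ _ _ (by norm_num) ?_
  norm_num
  refine G_step 0 _ _ _ _ _ _ _ _ _ _ _ _ _ _ _ _ _ _ _ _ (by norm_num) ?_
  norm_num
  refine G_step 1 _ _ _ _ _ _ _ _ _ _ _ _ _ _ _ _ _ _ _ _ (by norm_num) ?_
  norm_num
  refine G_step 1 _ _ _ _ _ _ _ _ _ _ _ _ _ _ _ _ _ _ _ _ (by norm_num) ?_
  norm_num
  refine G_step 1 _ _ _ _ _ _ _ _ _ _ _ _ _ _ _ _ _ _ _ _ (by norm_num) ?_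
  norm_num
  refine G_step 1 _ _ _ _ _ _ _ _ _ _ _ _ _ _ _ _ _ _ _ _ (by norm_num) ?_
  norm_num
  refine G_step 2 _ _ _ _ _ _ _ _ _ _ _ _ _ _ _ _ _ _ _ _ (by norm_num) ?_
  norm_num
  refine G_step 2 _ _ _ _ _ _ _ _ _ _ _ _ _ _ _ _ _ _ _ _ (by norm_num) ?_
  norm_num
  refine G_step 2 _ _ _ _ _ _ _ _ _ _ _ _ _ _ _ _ _ _ _ _ (by norm_num) ?_
  norm_num
  refine G_step 2 _ _ _ _ _ _ _ _ _ _ _ _ _ _ _ _ _ _ _ _ (by norm_num) ?_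
  norm_num
  refine G_step 3 _ _ _ _ _ _ _ _ _ _ _ _ _ _ _ _ _ _ _ _ (by norm_num) ?_
  norm_num
  refine G_step 3 _ _ _ _ _ _ _ _ _ _ _ _ _ _ _ _ _ _ _ _ (by norm_num) ?_
  norm_num
  refine G_step 3 _ _ _ _ _ _ _ _ _ _ _ _ _ _ _ _ _ _ _ _ (by norm_num) ?_
  norm_num
  refine G_step 3 _ _ _ _ _ _ _ _ _ _ _ _ _ _ _ _ _ _ _ _ (by norm_num) ?_
  norm_num
  intro t ht
  unfold G
  have := Real.exp_pos t
  simp only [zero_mul, zero_add, add_zero]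
  positivity

theorem G_neg_side : ∀ t : ℝ, 0 ≤ t → 0 ≤ G (-3) (1) (0) (0) (18) (-12) (3) (0) (-36) (32) (-14) (6) (30) (-32) (17) (-6) (-9) (11) (-6) (2) t := by
  refine G_step 0 _ _ _ _ _ _ _ _ _ _ _ _ _ _ _ _ _ _ _ _ (by norm_num) ?_
  norm_num
  refine G_step 0 _ _ _ _ _ _ _ _ _ _ _ _ _ _ _ _ _ _ _ _ (by norm_num) ?_
  norm_num
  refine G_step 0 _ _ _ _ _ _ _ _ _ _ _ _ _ _ _ _ _ _ _ _ (by norm_num) ?_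
  norm_num
  refine G_step 0 _ _ _ _ _ _ _ _ _ _ _ _ _ _ _ _ _ _ _ _ (by norm_num) ?_
  norm_num
  refine G_step 1 _ _ _ _ _ _ _ _ _ _ _ _ _ _ _ _ _ _ _ _ (by norm_num) ?_
  norm_num
  refine G_step 1 _ _ _ _ _ _ _ _ _ _ _ _ _ _ _ _ _ _ _ _ (by norm_num) ?_
  norm_num
  refine G_step 1 _ _ _ _ _ _ _ _ _ _ _ _ _ _ _ _ _ _ _ _ (by norm_num) ?_
  norm_num
  refine G_step 1 _ _ _ _ _ _ _ _ _ _ _ _ _ _ _ _ _ _ _ _ (by norm_num) ?_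
  norm_num
  refine G_step 2 _ _ _ _ _ _ _ _ _ _ _ _ _ _ _ _ _ _ _ _ (by norm_num) ?_
  norm_num
  refine G_step 2 _ _ _ _ _ _ _ _ _ _ _ _ _ _ _ _ _ _ _ _ (by norm_num) ?_
  norm_num
  refine G_step 2 _ _ _ _ _ _ _ _ _ _ _ _ _ _ _ _ _ _ _ _ (by norm_num) ?_
  norm_num
  refine G_step 2 _ _ _ _ _ _ _ _ _ _ _ _ _ _ _ _ _ _ _ _ (by norm_num) ?_
  norm_num
  refine G_step 3 _ _ _ _ _ _ _ _ _ _ _ _ _ _ _ _ _ _ _ _ (by norm_num) ?_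
  norm_num
  refine G_step 3 _ _ _ _ _ _ _ _ _ _ _ _ _ _ _ _ _ _ _ _ (by norm_num) ?_
  norm_num
  refine G_step 3 _ _ _ _ _ _ _ _ _ _ _ _ _ _ _ _ _ _ _ _ (by norm_num) ?_
  norm_num
  refine G_step 3 _ _ _ _ _ _ _ _ _ _ _ _ _ _ _ _ _ _ _ _ (by norm_num) ?_
  norm_num
  intro t ht
  unfold G
  have := Real.exp_pos t
  simp only [zero_mul, zero_add, add_zero]
  positivity

noncomputable def tau1D (c : ℝ) : ℝ :=
  -3 / (4 * c ^ 2 * Real.log c ^ 2) + (c - 3) / (2 * c ^ 2 * Real.log c ^ 3)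
    + (2 * c - 1) / (2 * c ^ 2 * (c - 1) ^ 2 * Real.log c)
    + 1 / (2 * c ^ 2 * (c - 1) * Real.log c ^ 2)

/-- The numerator of the second derivative of `tau1`. -/
noncomputable def numP (c L : ℝ) : ℝ :=
  (-6 * c ^ 2 + 6 * c - 2) * L ^ 3 + (3 * c ^ 3 - 14 * c ^ 2 + 17 * c - 6) * L ^ 2
    + (-c ^ 4 + 12 * c ^ 3 - 32 * c ^ 2 + 32 * c - 11) * L
    + (-3 * c ^ 4 + 18 * c ^ 3 - 36 * c ^ 2 + 30 * c - 9)

theorem tau1_hasDerivAt (c : ℝ) (hc : c ≠ 0) (hd : c - 1 ≠ 0) (hL : Real.log c ≠ 0) :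
    HasDerivAt tau1 (tau1D c) c := by
  have hl := Real.hasDerivAt_log hc
  have hi := hasDerivAt_id c
  have h1 := (hi.const_sub 3).div ((hi.const_mul 4).mul (hl.pow 2))
    (by simp [hc, hL])
  have h2 := (hasDerivAt_const c (1:ℝ)).div (((hi.const_mul 2).mul (hi.sub_const 1)).mul hl)
    (by simp [hc, hL, hd])
  refine (h1.sub h2).congr_deriv ?_
  simp only [tau1D, id, Pi.mul_apply, Pi.pow_apply]
  push_cast
  field_simp
  ring

theorem tau1D_hasDerivAt (c : ℝ) (hc : c ≠ 0) (hd : c - 1 ≠ 0) (hL : Real.log c ≠ 0) :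
    HasDerivAt tau1D (numP c (Real.log c) / (2 * c ^ 3 * Real.log c ^ 4 * (c - 1) ^ 3)) c := by
  have hl := Real.hasDerivAt_log hc
  have hi := hasDerivAt_id c
  have h1 := (hasDerivAt_const c (-3:ℝ)).div (((hi.pow 2).const_mul 4).mul (hl.pow 2))
    (by simp [hc, hL])
  have h2 := (hi.sub_const 3).div (((hi.pow 2).const_mul 2).mul (hl.pow 3))
    (by simp [hc, hL])
  have h3 := ((hi.const_mul 2).sub_const 1).div
    ((((hi.pow 2).const_mul 2).mul ((hi.sub_const 1).pow 2)).mul hl)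
    (by simp [hc, hL, hd])
  have h4 := (hasDerivAt_const c (1:ℝ)).div
    ((((hi.pow 2).const_mul 2).mul (hi.sub_const 1)).mul (hl.pow 2))
    (by simp [hc, hL, hd])
  refine (((h1.add h2).add h3).add h4).congr_deriv ?_
  simp only [numP, id, Pi.mul_apply, Pi.pow_apply]
  push_cast
  field_simp
  ring

theorem tau1_concave (s : Set ℝ) (hs : Convex ℝ s) (ho : IsOpen s)
    (h0 : ∀ c ∈ s, 0 < c ∧ c ≠ 1)
    (hP : ∀ c ∈ s, numP c (Real.log c) / (2 * c ^ 3 * Real.log c ^ 4 * (c - 1) ^ 3) ≤ 0) :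
    ConcaveOn ℝ s tau1 := by
  have hn : ∀ c ∈ s, c ≠ 0 ∧ c - 1 ≠ 0 ∧ Real.log c ≠ 0 := fun c hc =>
    ⟨(h0 c hc).1.ne', sub_ne_zero.2 (h0 c hc).2,
      Real.log_ne_zero_of_pos_of_ne_one (h0 c hc).1 (h0 c hc).2⟩
  have hd1 : ∀ c ∈ s, HasDerivAt tau1 (tau1D c) c := fun c hc =>
    tau1_hasDerivAt c (hn c hc).1 (hn c hc).2.1 (hn c hc).2.2
  have hd2 := fun c hc => tau1D_hasDerivAt c (hn c hc).1 (hn c hc).2.1 (hn c hc).2.2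
  refine concaveOn_of_hasDerivWithinAt2_nonpos hs
    (fun c hc => (hd1 c hc).continuousAt.continuousWithinAt) (f' := tau1D)
    (f'' := fun c => numP c (Real.log c) / (2 * c ^ 3 * Real.log c ^ 4 * (c - 1) ^ 3)) ?_ ?_ ?_
  · rw [ho.interior_eq]
    exact fun c hc => (hd1 c hc).hasDerivWithinAt
  · rw [ho.interior_eq]
    exact fun c hc => (hd2 c hc).hasDerivWithinAt
  · rw [ho.interior_eq]
    exact hP

theorem stmt_9 :
    ConcaveOn ℝ (Set.Ioo (0:ℝ) 1) tau1 ∧ ConcaveOn ℝ (Set.Ioi (1:ℝ)) tau1 := by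
  constructor
  · refine tau1_concave _ (convex_Ioo 0 1) isOpen_Ioo (fun c hc => ⟨hc.1, hc.2.ne⟩) ?_
    rintro c ⟨hc0, hc1⟩
    have hG := G_neg_side (-Real.log c) (neg_nonneg.2 (Real.log_nonpos hc0.le hc1.le))
    have hN : 0 ≤ numP c (Real.log c) := by
      unfold G at hG
      rw [Real.exp_neg, Real.exp_log hc0] at hG
      have h4 : 0 < c ^ 4 := by positivity
      refine (mul_nonneg h4.le hG).trans_eq ?_
      unfold numP
      field_simp
      ring
    have h3 : (c - 1) ^ 3 ≤ 0 := Odd.pow_nonpos (by decide) (by linarith)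
    exact div_nonpos_of_nonneg_of_nonpos hN (mul_nonpos_of_nonneg_of_nonpos (by positivity) h3)
  · refine tau1_concave _ (convex_Ioi 1) isOpen_Ioi
      (fun c hc => ⟨zero_lt_one.trans hc, (ne_of_lt hc).symm⟩) ?_
    intro c hc
    have hc1 : 1 < c := hc
    have hc0 : 0 < c := by linarith
    have hG := G_pos_side (Real.log c) (Real.log_nonneg hc1.le)
    have hN : numP c (Real.log c) ≤ 0 := by
      unfold G at hG
      rw [Real.exp_log hc0] at hG
      refine neg_nonneg.1 (hG.trans_eq ?_)
      unfold numP
      ring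
    have h3 : 0 ≤ (c - 1) ^ 3 := pow_nonneg (by linarith) 3
    exact div_nonpos_of_nonpos_of_nonneg hN (by positivity)
end

section
/- The function τ(c) = −(2c−3)/(2c·(log c)²) + 1/(c(1−c)·log c) + c/(2(1−c)²), extended continuously at c = 1, is concave on (0,∞); consequently for fixed a > b > 0 and λ > 0 the function x ↦ τ((a−x)/λ) + τ((b+x)/λ) is increasing on [0, (a−b)/2]. -/
noncomputable def tau (c : ℝ) : ℝ :=
  -(2 * c - 3) / (2 * c * (Real.log c) ^ 2) + 1 / (c * (1 - c) * Real.log c) +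
    c / (2 * (1 - c) ^ 2)

/-! ### Exponential polynomials with integer coefficients and a sign certificate -/

/-- Evaluation of a polynomial given by its list of integer coefficients. -/
noncomputable def pEval : List ℤ → ℝ → ℝ
  | [], _ => 0
  | c :: l, t => (c : ℝ) + t * pEval l t

def pAdd : List ℤ → List ℤ → List ℤ
  | [], q => q
  | p, [] => p
  | a :: p, b :: q => (a + b) :: pAdd p q

def pSmul (k : ℤ) : List ℤ → List ℤ
  | [] => []
  | a :: p => (k * a) :: pSmul k p

def pDer : List ℤ → List ℤ
  | [] => []
  | _ :: l => pAdd l (0 :: pDer l)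

/-- Evaluation of `∑ p_k(t) exp(t)^k`. -/
noncomputable def eEval : List (List ℤ) → ℝ → ℝ
  | [], _ => 0
  | p :: q, t => pEval p t + Real.exp t * eEval q t

def eAdd : List (List ℤ) → List (List ℤ) → List (List ℤ)
  | [], q => q
  | p, [] => p
  | a :: p, b :: q => pAdd a b :: eAdd p q

def eSmul (k : ℤ) : List (List ℤ) → List (List ℤ)
  | [] => []
  | a :: p => pSmul k a :: eSmul k p

def eDer : List (List ℤ) → List (List ℤ)
  | [] => []
  | p :: q => pDer p :: eAdd q (eDer q)

def pZero : List ℤ → Bool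
  | [] => true
  | a :: l => decide (a = 0) && pZero l

def eZero : List (List ℤ) → Bool
  | [] => true
  | a :: l => pZero a && eZero l

def pHead : List ℤ → ℤ
  | [] => 0
  | a :: _ => a

def eVal : List (List ℤ) → ℤ
  | [] => 0
  | a :: l => pHead a + eVal l

def eChk : List ℤ → List (List ℤ) → Bool
  | [], Q => eZero Q
  | k :: ks, Q => decide (eVal Q ≤ 0) && eChk ks (eAdd (eDer Q) (eSmul (-k) Q))

lemma pEval_add (p q : List ℤ) (t : ℝ) : pEval (pAdd p q) t = pEval p t + pEval q t := by
  induction p generalizing q with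
  | nil => simp [pAdd, pEval]
  | cons a p ih =>
    cases q with
    | nil => simp [pAdd, pEval]
    | cons b q => simp only [pAdd, pEval, ih]; push_cast; ring

lemma pEval_smul (k : ℤ) (p : List ℤ) (t : ℝ) : pEval (pSmul k p) t = k * pEval p t := by
  induction p with
  | nil => simp [pSmul, pEval]
  | cons a p ih => simp only [pSmul, pEval, ih]; push_cast; ring

lemma pEval_der (p : List ℤ) (t : ℝ) : HasDerivAt (pEval p) (pEval (pDer p) t) t := by
  induction p with
  | nil => simpa [pDer, pEval] using hasDerivAt_const t (0 : ℝ)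
  | cons a p ih =>
    have h := ((hasDerivAt_id t).mul ih).const_add (a : ℝ)
    refine (h.congr_deriv ?_)
    simp only [pDer, pEval_add, pEval, id]
    push_cast; ring

lemma eEval_add (p q : List (List ℤ)) (t : ℝ) : eEval (eAdd p q) t = eEval p t + eEval q t := by
  induction p generalizing q with
  | nil => simp [eAdd, eEval]
  | cons a p ih =>
    cases q with
    | nil => simp [eAdd, eEval]
    | cons b q => simp only [eAdd, eEval, ih, pEval_add]; ring

lemma eEval_smul (k : ℤ) (p : List (List ℤ)) (t : ℝ) : eEval (eSmul k p) t = k * eEval p t := by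
  induction p with
  | nil => simp [eSmul, eEval]
  | cons a p ih => simp only [eSmul, eEval, ih, pEval_smul]; ring

lemma eEval_der (p : List (List ℤ)) (t : ℝ) : HasDerivAt (eEval p) (eEval (eDer p) t) t := by
  induction p with
  | nil => simpa [eDer, eEval] using hasDerivAt_const t (0 : ℝ)
  | cons a p ih =>
    have h := (pEval_der a t).add ((Real.hasDerivAt_exp t).mul ih)
    refine (h.congr_deriv ?_)
    simp only [eDer, eEval_add, eEval]
    ring

lemma pZero_eval (p : List ℤ) (h : pZero p = true) (t : ℝ) : pEval p t = 0 := by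
  induction p with
  | nil => rfl
  | cons a p ih =>
    simp only [pZero, Bool.and_eq_true, decide_eq_true_eq] at h
    simp [pEval, h.1, ih h.2]

lemma eZero_eval (p : List (List ℤ)) (h : eZero p = true) (t : ℝ) : eEval p t = 0 := by
  induction p with
  | nil => rfl
  | cons a p ih =>
    simp only [eZero, Bool.and_eq_true] at h
    simp [eEval, pZero_eval a h.1, ih h.2]

lemma eVal_eval (p : List (List ℤ)) : eEval p 0 = eVal p := by
  induction p with
  | nil => simp [eEval, eVal]
  | cons a p ih =>
    have : pEval a 0 = pHead a := by cases a <;> simp [pEval, pHead]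
    simp [eEval, eVal, ih, this]

/-- Soundness of the certificate. -/
lemma eChk_sound (ks : List ℤ) (Q : List (List ℤ)) (h : eChk ks Q = true) (t : ℝ) (ht : 0 ≤ t) :
    eEval Q t ≤ 0 := by
  induction ks generalizing Q t with
  | nil => exact (eZero_eval Q h t).le
  | cons k ks ih =>
    simp only [eChk, Bool.and_eq_true, decide_eq_true_eq] at h
    obtain ⟨h0, h1⟩ := h
    have hd : ∀ s : ℝ, HasDerivAt (fun s => Real.exp (-(k : ℝ) * s) * eEval Q s)
        (Real.exp (-(k : ℝ) * s) * eEval (eAdd (eDer Q) (eSmul (-k) Q)) s) s := by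
      intro s
      have he : HasDerivAt (fun s : ℝ => Real.exp (-(k : ℝ) * s))
          (Real.exp (-(k : ℝ) * s) * (-(k : ℝ) * 1)) s :=
        ((hasDerivAt_id s).const_mul (-(k : ℝ))).exp
      refine (he.mul (eEval_der Q s)).congr_deriv ?_
      simp only [eEval_add, eEval_smul]
      push_cast; ring
    have hanti : AntitoneOn (fun s => Real.exp (-(k : ℝ) * s) * eEval Q s) (Set.Ici 0) := by
      apply antitoneOn_of_deriv_nonpos (convex_Ici 0)
      · exact fun s _ => (hd s).continuousAt.continuousWithinAt
      · exact fun s _ => (hd s).differentiableAt.differentiableWithinAt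
      · intro s hs
        rw [interior_Ici] at hs
        rw [(hd s).deriv]
        exact mul_nonpos_of_nonneg_of_nonpos (Real.exp_pos _).le (ih _ h1 s (le_of_lt hs))
    have h2 := hanti (Set.mem_Ici.2 le_rfl) (Set.mem_Ici.2 ht) ht
    have h3 : (eVal Q : ℝ) ≤ 0 := by exact_mod_cast h0
    simp only [mul_zero, Real.exp_zero, one_mul, eVal_eval] at h2
    have h4 := Real.exp_pos (-(k : ℝ) * t)
    by_contra hc
    push Not at hc
    have := mul_pos h4 hc
    linarith

/-! ### The three inequalities -/

/-- numerator of the second derivative -/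
lemma num2_nonpos (c L : ℝ) (hc : 0 < c) (hL : L = Real.log c) :
    (-12 - 4 * L) * c * (c - 1) ^ 4 + (18 + 22 * L + 12 * L ^ 2 + 4 * L ^ 3) * (c - 1) ^ 4
      - 4 * c ^ 3 * (c - 1) * L ^ 3 - 4 * c ^ 2 * (c - 1) ^ 2 * L ^ 2
      - (c - 1) ^ 3 * c * (2 * L ^ 2 + 4 * L) + 2 * L ^ 4 * c ^ 3 * (c + 2) ≤ 0 := by
  have hE : Real.exp L = c := by rw [hL, Real.exp_log hc]
  rcases le_total 0 L with h | h
  · have := eChk_sound [0, 0, 0, 0, 1, 1, 1, 1, 2, 2, 2, 2, 3, 3, 3, 3, 3, 4, 4, 4, 4, 4, 5, 5]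
      [[18, 22, 12, 4], [-84, -88, -46, -16], [156, 136, 62, 24], [-144, -100, -34, -12, 4],
       [66, 34, 6, 0, 2], [-12, -4]] (by rfl) L h
    simp only [eEval, pEval, hE] at this
    push_cast at this
    linarith
  · have := eChk_sound [0, 0, 1, 1, 1, 1, 1, 2, 2, 2, 2, 2, 3, 3, 3, 3, 4, 4, 4, 4, 5, 5, 5, 5]
      [[-12, 4], [66, -34, 6, 0, 2], [-144, 100, -34, 12, 4], [156, -136, 62, -24],
       [-84, 88, -46, 16], [18, -22, 12, -4]] (by rfl) (-L) (by linarith)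
    simp only [eEval, pEval, Real.exp_neg, hE] at this
    push_cast at this
    have h5 := mul_nonpos_of_nonneg_of_nonpos (pow_pos hc 5).le this
    refine le_trans (le_of_eq ?_) h5
    field_simp
    ring

lemma num0_upper (c L : ℝ) (hc : 0 < c) (hL : L = Real.log c) :
    (3 - 2 * c) * (c - 1) ^ 2 - 2 * L * (c - 1) + L ^ 2 * c ^ 2
      - 2 * L ^ 2 * c * (c - 1) ^ 2 * (-3 / 8 + 1 / 4 * (c - 1)) ≤ 0 := by
  have hE : Real.exp L = c := by rw [hL, Real.exp_log hc]
  rcases le_total 0 L with h | h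
  · have := eChk_sound [0, 0, 1, 1, 1, 2, 2, 2, 3, 3, 3, 4, 4, 4]
      [[36, 24], [-96, -24, 15], [84, 0, -24], [-24, 0, 27], [0, 0, -6]] (by rfl) L h
    simp only [eEval, pEval, hE] at this
    push_cast at this
    linarith
  · have := eChk_sound [0, 0, 0, 1, 1, 1, 2, 2, 2, 3, 3, 3, 4, 4]
      [[0, 0, -6], [-24, 0, 27], [84, 0, -24], [-96, 24, 15], [36, -24]]
      (by rfl) (-L) (by linarith)
    simp only [eEval, pEval, Real.exp_neg, hE] at this
    push_cast at this
    have h5 := mul_nonpos_of_nonneg_of_nonpos (pow_pos hc 4).le this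
    have h6 := mul_nonpos_of_nonneg_of_nonpos (by norm_num : (0:ℝ) ≤ 1 / 12) h5
    refine le_trans (le_of_eq ?_) h6
    field_simp
    ring

lemma num0_lower (c L : ℝ) (hc : 1 < c) (hL : L = Real.log c) :
    0 ≤ (3 - 2 * c) * (c - 1) ^ 2 - 2 * L * (c - 1) + L ^ 2 * c ^ 2
      - 2 * L ^ 2 * c * (c - 1) ^ 2 * (-3 / 8 - 3 / 4 * (c - 1)) := by
  have hE : Real.exp L = c := by rw [hL, Real.exp_log (by linarith)]
  have h : 0 ≤ L := by rw [hL]; exact Real.log_nonneg hc.le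
  have := eChk_sound [0, 0, 1, 1, 1, 2, 2, 2, 3, 3, 3, 4, 4, 4]
      [[-36, -24], [96, 24, 9], [-84, 0, -48], [24, 0, 45], [0, 0, -18]] (by rfl) L h
  simp only [eEval, pEval, hE] at this
  push_cast at this
  linarith

/-! ### Consequences for `tau` -/

lemma tau_eq (c : ℝ) (hc : 0 < c) (h1 : c ≠ 1) (e : ℝ) :
    tau c - e = ((3 - 2 * c) * (c - 1) ^ 2 - 2 * Real.log c * (c - 1) + Real.log c ^ 2 * c ^ 2
      - 2 * Real.log c ^ 2 * c * (c - 1) ^ 2 * e) /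
      (2 * Real.log c ^ 2 * c * (c - 1) ^ 2) := by
  have hL : Real.log c ≠ 0 := Real.log_ne_zero_of_pos_of_ne_one hc h1
  have h2 : c - 1 ≠ 0 := sub_ne_zero.2 h1
  have h3 : 1 - c ≠ 0 := sub_ne_zero.2 h1.symm
  have h4 : (1 - c) = -(c - 1) := by ring
  unfold tau
  rw [h4]
  generalize Real.log c = L at *
  obtain ⟨d, rfl⟩ : ∃ d, c = d + 1 := ⟨c - 1, by ring⟩
  simp only [add_sub_cancel_right] at *
  field_simp
  ring

lemma tau_upper (c : ℝ) (hc : 0 < c) (h1 : c ≠ 1) : tau c ≤ -3 / 8 + 1 / 4 * (c - 1) := by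
  have h := tau_eq c hc h1 (-3 / 8 + 1 / 4 * (c - 1))
  have h2 := div_nonpos_of_nonpos_of_nonneg (num0_upper c _ hc rfl)
    (by positivity : 0 ≤ 2 * Real.log c ^ 2 * c * (c - 1) ^ 2)
  linarith

lemma tau_lower (c : ℝ) (h1 : 1 < c) : -3 / 8 - 3 / 4 * (c - 1) ≤ tau c := by
  have hc : 0 < c := by linarith
  have h := tau_eq c hc h1.ne' (-3 / 8 - 3 / 4 * (c - 1))
  have h2 := div_nonneg (num0_lower c _ h1 rfl)
    (by positivity : 0 ≤ 2 * Real.log c ^ 2 * c * (c - 1) ^ 2)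
  linarith

noncomputable def tauA (u v p : ℝ) : ℝ :=
  -v ^ 2 + 3 / 2 * (u * v ^ 2) + u * v + p * v + (p ^ 2 - p) / 2

noncomputable def tauB (u v p : ℝ) : ℝ :=
  2 * (u * v ^ 3) - 5 / 2 * (u ^ 2 * v ^ 2) - 3 * (u ^ 2 * v ^ 3) - u ^ 2 * v + p ^ 2 * v
    - u * p * v ^ 2 + p ^ 3 - p ^ 2 / 2

noncomputable def tauC (u v p : ℝ) : ℝ :=
  2 * (-u ^ 2 * v ^ 3 - 3 * u ^ 2 * v ^ 4) - 5 / 2 * (-2 * u ^ 3 * v ^ 2 - 2 * u ^ 3 * v ^ 3)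
    - 3 * (-2 * u ^ 3 * v ^ 3 - 3 * u ^ 3 * v ^ 4) - (-2 * u ^ 3 * v - u ^ 3 * v ^ 2)
    + (2 * p ^ 3 * v - p ^ 2 * u * v ^ 2)
    - (-u ^ 2 * p * v ^ 2 + u * p ^ 2 * v ^ 2 - 2 * u ^ 2 * p * v ^ 3) + 3 * p ^ 4 - p ^ 3

lemma tau_eqA (c : ℝ) (hc : 0 < c) (h1 : c ≠ 1) :
    tau c = tauA c⁻¹ (Real.log c)⁻¹ (1 - c)⁻¹ := by
  have hL : Real.log c ≠ 0 := Real.log_ne_zero_of_pos_of_ne_one hc h1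
  have h3 : 1 - c ≠ 0 := sub_ne_zero.2 h1.symm
  unfold tau tauA
  generalize Real.log c = L at *
  obtain ⟨d, rfl⟩ : ∃ d, c = 1 - d := ⟨1 - c, by ring⟩
  simp only [sub_sub_cancel] at *
  field_simp
  ring

lemma ders (c : ℝ) (hc : 0 < c) (h1 : c ≠ 1) :
    HasDerivAt (fun c : ℝ => c⁻¹) (-(c⁻¹) ^ 2) c ∧
    HasDerivAt (fun c : ℝ => (Real.log c)⁻¹) (-c⁻¹ * ((Real.log c)⁻¹) ^ 2) c ∧
    HasDerivAt (fun c : ℝ => (1 - c)⁻¹) (((1 - c)⁻¹) ^ 2) c := by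
  have hL : Real.log c ≠ 0 := Real.log_ne_zero_of_pos_of_ne_one hc h1
  have h3 : 1 - c ≠ 0 := sub_ne_zero.2 h1.symm
  refine ⟨?_, ?_, ?_⟩
  · refine (hasDerivAt_inv hc.ne').congr_deriv ?_
    rw [inv_pow]
  · refine ((Real.hasDerivAt_log hc.ne').inv hL).congr_deriv ?_
    field_simp
  · refine (((hasDerivAt_id c).const_sub 1).inv h3).congr_deriv ?_
    simp

lemma tauA_der (c : ℝ) (hc : 0 < c) (h1 : c ≠ 1) :
    HasDerivAt (fun c => tauA c⁻¹ (Real.log c)⁻¹ (1 - c)⁻¹)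
      (tauB c⁻¹ (Real.log c)⁻¹ (1 - c)⁻¹) c := by
  obtain ⟨hu, hv, hp⟩ := ders c hc h1
  have := (((((hv.pow 2).neg).add ((hu.mul (hv.pow 2)).const_mul (3 / 2))).add (hu.mul hv)).add
    (hp.mul hv)).add (((hp.pow 2).sub hp).div_const 2)
  refine this.congr_deriv ?_
  simp only [tauB, Pi.pow_apply]
  push_cast
  ring

lemma tauB_der (c : ℝ) (hc : 0 < c) (h1 : c ≠ 1) :
    HasDerivAt (fun c => tauB c⁻¹ (Real.log c)⁻¹ (1 - c)⁻¹)
      (tauC c⁻¹ (Real.log c)⁻¹ (1 - c)⁻¹) c := by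
  obtain ⟨hu, hv, hp⟩ := ders c hc h1
  have := ((((((((hu.mul (hv.pow 3)).const_mul 2).sub
    (((hu.pow 2).mul (hv.pow 2)).const_mul (5 / 2))).sub
    (((hu.pow 2).mul (hv.pow 3)).const_mul 3)).sub ((hu.pow 2).mul hv)).add
    ((hp.pow 2).mul hv)).sub ((hu.mul hp).mul (hv.pow 2))).add (hp.pow 3)).sub
    ((hp.pow 2).div_const 2)
  refine this.congr_deriv ?_
  simp only [tauC, Pi.pow_apply, Pi.mul_apply]
  push_cast
  ring

lemma tauC_nonpos (c : ℝ) (hc : 0 < c) (h1 : c ≠ 1) :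
    tauC c⁻¹ (Real.log c)⁻¹ (1 - c)⁻¹ ≤ 0 := by
  have hL : Real.log c ≠ 0 := Real.log_ne_zero_of_pos_of_ne_one hc h1
  have h2 : c - 1 ≠ 0 := sub_ne_zero.2 h1
  have h := div_nonpos_of_nonpos_of_nonneg (num2_nonpos c _ hc rfl)
    (by positivity : 0 ≤ 2 * Real.log c ^ 4 * c ^ 3 * (c - 1) ^ 4)
  refine le_trans (le_of_eq ?_) h
  have h4 : (1 - c) = -(c - 1) := by ring
  unfold tauC
  rw [h4]
  generalize Real.log c = L at *
  obtain ⟨d, rfl⟩ : ∃ d, c = d + 1 := ⟨c - 1, by ring⟩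
  simp only [add_sub_cancel_right, inv_neg] at *
  field_simp
  ring

lemma concave_piece (f : ℝ → ℝ) (hcont : ContinuousOn f (Set.Ioi (0:ℝ)))
    (hf : ∀ c : ℝ, 0 < c → c ≠ 1 → f c = tau c) (D : Set ℝ) (hD : Convex ℝ D)
    (hD0 : D ⊆ Set.Ioi 0) (hD1 : ∀ c ∈ interior D, c ≠ 1) : ConcaveOn ℝ D f := by
  have hpos : ∀ c ∈ interior D, 0 < c := fun c hc => hD0 (interior_subset hc)
  refine concaveOn_of_hasDerivWithinAt2_nonpos hD (hcont.mono hD0)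
    (f' := fun c => tauB c⁻¹ (Real.log c)⁻¹ (1 - c)⁻¹)
    (f'' := fun c => tauC c⁻¹ (Real.log c)⁻¹ (1 - c)⁻¹) ?_ ?_ ?_
  · intro c hc
    refine (tauA_der c (hpos c hc) (hD1 c hc)).hasDerivWithinAt.congr ?_ ?_
    · intro y hy
      rw [hf y (hpos y hy) (hD1 y hy), tau_eqA y (hpos y hy) (hD1 y hy)]
    · rw [hf c (hpos c hc) (hD1 c hc), tau_eqA c (hpos c hc) (hD1 c hc)]
  · intro c hc
    exact (tauB_der c (hpos c hc) (hD1 c hc)).hasDerivWithinAt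
  · intro c hc
    exact tauC_nonpos c (hpos c hc) (hD1 c hc)

/-- Gluing two concave pieces at a point with a common supporting line. -/
lemma concave_glue (f : ℝ → ℝ) (m : ℝ) (h1 : ConcaveOn ℝ (Set.Ioc 0 1) f)
    (h2 : ConcaveOn ℝ (Set.Ici 1) f) (hT : ∀ c, 0 < c → f c ≤ f 1 + m * (c - 1)) :
    ConcaveOn ℝ (Set.Ioi (0:ℝ)) f := by
  refine concaveOn_of_slope_anti_adjacent (convex_Ioi 0) ?_
  intro x y z hx hz hxy hyz
  have hx : 0 < x := hx
  have hy : 0 < y := hx.trans hxy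
  have hz : 0 < z := hy.trans hyz
  rcases le_total z 1 with hz1 | hz1
  · exact h1.slope_anti_adjacent ⟨hx, by linarith⟩ ⟨hz, hz1⟩ hxy hyz
  rcases le_total 1 x with hx1 | hx1
  · exact h2.slope_anti_adjacent hx1 hz1 hxy hyz
  have tx := hT x hx
  have ty := hT y hy
  have tz := hT z hz
  rcases lt_trichotomy y 1 with hy1 | hy1 | hy1
  · have h := h1.slope_anti_adjacent ⟨hx, hx1⟩ ⟨one_pos, le_rfl⟩ hxy hy1
    refine le_trans ?_ h
    rw [div_le_div_iff₀ (by linarith) (by linarith)]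
    have hs : m ≤ (f 1 - f y) / (1 - y) := by
      rw [le_div_iff₀ (by linarith)]; linarith
    rw [le_div_iff₀ (by linarith)] at hs
    nlinarith
  · subst hy1
    have a1 : (f z - f 1) / (z - 1) ≤ m := by rw [div_le_iff₀ (by linarith)]; linarith
    have a2 : m ≤ (f 1 - f x) / (1 - x) := by rw [le_div_iff₀ (by linarith)]; linarith
    linarith
  · have h := h2.slope_anti_adjacent (Set.mem_Ici.2 le_rfl) (Set.mem_Ici.2 hz1) hy1 hyz
    refine le_trans h ?_
    rw [div_le_div_iff₀ (by linarith) (by linarith)]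
    nlinarith

theorem stmt_10 (f : ℝ → ℝ) (hcont : ContinuousOn f (Set.Ioi (0:ℝ)))
    (hf : ∀ c : ℝ, 0 < c → c ≠ 1 → f c = tau c) :
    ConcaveOn ℝ (Set.Ioi (0:ℝ)) f ∧
      ∀ a b lam : ℝ, 0 < b → b < a → 0 < lam →
        MonotoneOn (fun x => f ((a - x) / lam) + f ((b + x) / lam))
          (Set.Icc (0:ℝ) ((a - b) / 2)) := by
  have hone : -3 / 8 ≤ f 1 := by
    have hc1 : Filter.Tendsto f (nhdsWithin 1 (Set.Ioi 1)) (nhds (f 1)) :=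
      ((hcont 1 (Set.mem_Ioi.2 one_pos)).mono (fun y (hy : 1 < y) => one_pos.trans hy))
    have hl : Filter.Tendsto (fun c : ℝ => -3 / 8 - 3 / 4 * (c - 1)) (nhdsWithin 1 (Set.Ioi 1))
        (nhds (-3 / 8 - 3 / 4 * (1 - 1))) :=
      (Continuous.tendsto (by fun_prop) (1 : ℝ)).mono_left nhdsWithin_le_nhds
    have := le_of_tendsto_of_tendsto hl hc1 (by
      filter_upwards [self_mem_nhdsWithin] with c hc
      have hc : 1 < c := hc
      rw [hf c (by linarith) hc.ne']
      exact tau_lower c hc)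
    linarith
  have hconc : ConcaveOn ℝ (Set.Ioi (0:ℝ)) f := by
    refine concave_glue f (1 / 4) ?_ ?_ ?_
    · refine concave_piece f hcont hf _ (convex_Ioc 0 1) (fun x hx => hx.1) ?_
      intro c hc
      rw [interior_Ioc] at hc
      exact hc.2.ne
    · refine concave_piece f hcont hf _ (convex_Ici 1)
        (fun x (hx : 1 ≤ x) => lt_of_lt_of_le one_pos hx) ?_
      intro c hc
      rw [interior_Ici] at hc
      exact ne_of_gt hc
    · intro c hc
      by_cases h : c = 1
      · subst h; simp
      · rw [hf c hc h]
        have := tau_upper c hc h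
        linarith
  refine ⟨hconc, ?_⟩
  intro a b lam hb hab hlam x hx y hy hxy
  rcases hxy.eq_or_lt with rfl | hlt
  · exact le_rfl
  have hd : 0 < a - b - 2 * x := by linarith [hy.2]
  have hd' : a - b - 2 * x ≠ 0 := hd.ne'
  have hp : (b + x) / lam ∈ Set.Ioi (0:ℝ) := div_pos (by linarith [hx.1]) hlam
  have hq : (a - x) / lam ∈ Set.Ioi (0:ℝ) := div_pos (by linarith) hlam
  obtain ⟨s, hs⟩ : ∃ s : ℝ, s = (y - x) / (a - b - 2 * x) := ⟨_, rfl⟩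
  have hs0 : 0 ≤ s := by rw [hs]; exact div_nonneg (by linarith) hd.le
  have hs1 : 0 ≤ 1 - s := by
    rw [hs, sub_nonneg, div_le_one hd]; linarith [hy.2]
  have hse : s * (a - b - 2 * x) = y - x := by rw [hs]; exact div_mul_cancel₀ _ hd'
  have k1 := hconc.2 hp hq hs0 hs1 (by ring)
  have k2 := hconc.2 hp hq hs1 hs0 (by ring)
  have e1 : s * ((b + x) / lam) + (1 - s) * ((a - x) / lam) = (a - y) / lam := by
    field_simp; linarith
  have e2 : (1 - s) * ((b + x) / lam) + s * ((a - x) / lam) = (b + y) / lam := by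
    field_simp; linarith
  simp only [smul_eq_mul] at k1 k2
  rw [e1] at k1
  rw [e2] at k2
  show f ((a - x) / lam) + f ((b + x) / lam) ≤ f ((a - y) / lam) + f ((b + y) / lam)
  linarith
end
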